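/- arXiv:2311.16285 — 2 statements merged into one kernel-verified Lean document; each statement's English description precedes it below -/
import Mathlib

section
/- For every L > 0 there exists a constant C > 0 (depending only on L) such that for every nonnegative L-periodic function v ∈ C²(ℝ) one has ∫₀^L v(x)² (v''(x))² dx ≥ C (∫₀^L v(x) dx)² ∫₀^L (v'(x))² dx. -/
/-! Integrating `v v''` by parts and applying Cauchy–Schwarz bounds `(∫ v'²)²` by
`(b - a) ∫ v² v''²`. If `(∫ v)²` is at most `4 (b - a)³ ∫ v'²`, this is already the claim.
Otherwise the mean of `v` dominates its oscillation, so `|v|` is everywhere at least half of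
`|∫ v| / (b - a)`; then `∫ v² v''²` controls `(∫ v)² ∫ v''²`, and the Poincaré inequality for `v'`,
which vanishes somewhere, concludes. -/

open MeasureTheory Set

theorem sq_integral_le_measureReal_univ_mul_integral_sq {α : Type*} [MeasurableSpace α]
    {μ : Measure α} [IsFiniteMeasure μ] {f : α → ℝ} (hf : Integrable f μ)
    (hf_sq : Integrable (fun x ↦ f x ^ 2) μ) :
    (∫ x, f x ∂μ) ^ 2 ≤ μ.real univ * ∫ x, f x ^ 2 ∂μ := by
  rcases eq_zero_or_neZero μ with rfl | hμ
  · simp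
  have jensen : (⨍ x, f x ∂μ) ^ 2 ≤ ⨍ x, f x ^ 2 ∂μ :=
    even_two.convexOn_pow.map_average_le (continuous_pow 2).continuousOn isClosed_univ
      (Filter.Eventually.of_forall fun _ ↦ mem_univ _) hf hf_sq
  calc (∫ x, f x ∂μ) ^ 2 = μ.real univ ^ 2 * (⨍ x, f x ∂μ) ^ 2 := by
        rw [← measure_smul_average, smul_eq_mul, mul_pow]
    _ ≤ μ.real univ ^ 2 * ⨍ x, f x ^ 2 ∂μ := by gcongr
    _ = μ.real univ * ∫ x, f x ^ 2 ∂μ := by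
        rw [← measure_smul_average μ (fun x ↦ f x ^ 2), smul_eq_mul]
        ring

section IntervalInequalities

variable {a b c x y : ℝ} {f v : ℝ → ℝ}

theorem sq_intervalIntegral_le_sub_mul_integral_sq (hab : a ≤ b)
    (hf : IntervalIntegrable f volume a b)
    (hf_sq : IntervalIntegrable (fun x ↦ f x ^ 2) volume a b) :
    (∫ x in a..b, f x) ^ 2 ≤ (b - a) * ∫ x in a..b, f x ^ 2 := by
  simpa only [intervalIntegral.integral_of_le hab, measureReal_restrict_apply_univ,
    Real.volume_real_Ioc_of_le hab] using
    sq_integral_le_measureReal_univ_mul_integral_sq hf.1 hf_sq.1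

theorem sq_sub_le_sub_mul_integral_sq_deriv (hf : AbsolutelyContinuousOnInterval f a b)
    (hf'_sq : IntervalIntegrable (fun x ↦ deriv f x ^ 2) volume a b)
    (hx : x ∈ Icc a b) (hy : y ∈ Icc a b) :
    (f x - f y) ^ 2 ≤ (b - a) * ∫ z in a..b, deriv f z ^ 2 := by
  wlog hyx : y ≤ x generalizing x y
  · rw [← neg_sub, neg_sq]
    exact this hy hx (le_of_not_ge hyx)
  have hab : a ≤ b := hx.1.trans hx.2
  have hsub : uIcc y x ⊆ uIcc a b := by
    rw [uIcc_of_le hyx, uIcc_of_le hab]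
    exact Icc_subset_Icc hy.1 hx.2
  have hf_yx := hf.mono hsub
  calc (f x - f y) ^ 2 = (∫ z in y..x, deriv f z) ^ 2 := by rw [hf_yx.integral_deriv_eq_sub]
    _ ≤ (x - y) * ∫ z in y..x, deriv f z ^ 2 :=
        sq_intervalIntegral_le_sub_mul_integral_sq hyx hf_yx.intervalIntegrable_deriv
          (hf'_sq.mono_set hsub)
    _ ≤ (b - a) * ∫ z in a..b, deriv f z ^ 2 := by
        gcongr
        · exact intervalIntegral.integral_nonneg hyx fun _ _ ↦ sq_nonneg _
        · exact hx.2
        · exact hy.1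
        · exact intervalIntegral.integral_mono_interval hy.1 hyx hx.2
            (Filter.Eventually.of_forall fun _ ↦ sq_nonneg _) hf'_sq

theorem integral_sq_sub_le_sq_mul_integral_sq_deriv (hf : AbsolutelyContinuousOnInterval f a b)
    (hf'_sq : IntervalIntegrable (fun x ↦ deriv f x ^ 2) volume a b) (hc : c ∈ Icc a b) :
    ∫ x in a..b, (f x - f c) ^ 2 ≤ (b - a) ^ 2 * ∫ x in a..b, deriv f x ^ 2 := by
  have hab : a ≤ b := hc.1.trans hc.2
  calc ∫ x in a..b, (f x - f c) ^ 2
      ≤ ∫ _ in a..b, (b - a) * ∫ z in a..b, deriv f z ^ 2 :=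
        intervalIntegral.integral_mono_on hab
          ((hf.continuousOn.sub continuousOn_const).pow 2).intervalIntegrable
          intervalIntegrable_const
          fun x hx ↦ sq_sub_le_sub_mul_integral_sq_deriv hf hf'_sq hx hc
    _ = (b - a) ^ 2 * ∫ x in a..b, deriv f x ^ 2 := by
        rw [intervalIntegral.integral_const, smul_eq_mul]
        ring

theorem sq_integral_sub_mul_le_pow_mul_integral_sq_deriv
    (hf : AbsolutelyContinuousOnInterval f a b)
    (hf'_sq : IntervalIntegrable (fun x ↦ deriv f x ^ 2) volume a b) (hc : c ∈ Icc a b) :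
    ((∫ x in a..b, f x) - (b - a) * f c) ^ 2 ≤ (b - a) ^ 3 * ∫ x in a..b, deriv f x ^ 2 := by
  have hab : a ≤ b := hc.1.trans hc.2
  have hf_sub : ContinuousOn (fun x ↦ f x - f c) (uIcc a b) :=
    hf.continuousOn.sub continuousOn_const
  calc ((∫ x in a..b, f x) - (b - a) * f c) ^ 2
      = (∫ x in a..b, (f x - f c)) ^ 2 := by
        rw [intervalIntegral.integral_sub hf.continuousOn.intervalIntegrable
          intervalIntegrable_const, intervalIntegral.integral_const, smul_eq_mul]
    _ ≤ (b - a) * ∫ x in a..b, (f x - f c) ^ 2 :=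
        sq_intervalIntegral_le_sub_mul_integral_sq hab hf_sub.intervalIntegrable
          (hf_sub.pow 2).intervalIntegrable
    _ ≤ (b - a) * ((b - a) ^ 2 * ∫ x in a..b, deriv f x ^ 2) :=
        mul_le_mul_of_nonneg_left (integral_sq_sub_le_sq_mul_integral_sq_deriv hf hf'_sq hc)
          (sub_nonneg.2 hab)
    _ = (b - a) ^ 3 * ∫ x in a..b, deriv f x ^ 2 := by ring

theorem sq_integral_sq_deriv_le_sub_mul_integral_sq_mul_sq_deriv_deriv (hab : a ≤ b)
    (hv : AbsolutelyContinuousOnInterval v a b)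
    (hv' : AbsolutelyContinuousOnInterval (deriv v) a b)
    (hv''_sq : IntervalIntegrable (fun x ↦ deriv (deriv v) x ^ 2) volume a b)
    (hbdry : v b * deriv v b = v a * deriv v a) :
    (∫ x in a..b, deriv v x ^ 2) ^ 2 ≤
      (b - a) * ∫ x in a..b, v x ^ 2 * deriv (deriv v) x ^ 2 := by
  have by_parts : ∫ x in a..b, v x * deriv (deriv v) x = -∫ x in a..b, deriv v x ^ 2 := by
    simp only [hv.integral_mul_deriv_eq_deriv_mul hv', hbdry, sub_self, zero_sub, sq]
  rw [← neg_sq, ← by_parts]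
  simpa only [mul_pow] using sq_intervalIntegral_le_sub_mul_integral_sq hab
    (hv'.intervalIntegrable_deriv.continuousOn_mul hv.continuousOn)
    (by simpa only [mul_pow, Pi.pow_apply] using hv''_sq.continuousOn_mul (hv.continuousOn.pow 2))

theorem sq_integral_mul_integral_sq_le_of_pow_mul_integral_sq_deriv_le {g : ℝ → ℝ} (hab : a ≤ b)
    (hf : AbsolutelyContinuousOnInterval f a b)
    (hf'_sq : IntervalIntegrable (fun x ↦ deriv f x ^ 2) volume a b)
    (hg_sq : IntervalIntegrable (fun x ↦ g x ^ 2) volume a b)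
    (hmean : 4 * (b - a) ^ 3 * ∫ x in a..b, deriv f x ^ 2 ≤ (∫ x in a..b, f x) ^ 2) :
    (∫ x in a..b, f x) ^ 2 * ∫ x in a..b, g x ^ 2 ≤
      4 * (b - a) ^ 2 * ∫ x in a..b, f x ^ 2 * g x ^ 2 := by
  have half_mean_le : ∀ x ∈ Icc a b, (∫ z in a..b, f z) ^ 2 ≤ 4 * (b - a) ^ 2 * f x ^ 2 := by
    intro x hx
    have hosc := sq_integral_sub_mul_le_pow_mul_integral_sq_deriv hf hf'_sq hx
    have hsplit := add_sq_le (a := (∫ z in a..b, f z) - (b - a) * f x) (b := (b - a) * f x)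
    rw [sub_add_cancel, mul_pow] at hsplit
    linarith
  rw [← intervalIntegral.integral_const_mul, ← intervalIntegral.integral_const_mul]
  refine intervalIntegral.integral_mono_on hab (hg_sq.const_mul _)
    ((hg_sq.continuousOn_mul (hf.continuousOn.pow 2)).const_mul _) fun x hx ↦ ?_
  rw [← mul_assoc]
  exact mul_le_mul_of_nonneg_right (half_mean_le x hx) (sq_nonneg _)

/-- The two boundary conditions hold for periodic, Dirichlet and Neumann data alike. -/
theorem stmt_4_general (hab : a ≤ b) (hv : AbsolutelyContinuousOnInterval v a b)
    (hv' : AbsolutelyContinuousOnInterval (deriv v) a b)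
    (hv''_sq : IntervalIntegrable (fun x ↦ deriv (deriv v) x ^ 2) volume a b)
    (hbdry : v b * deriv v b = v a * deriv v a) (hcrit : ∃ c ∈ Icc a b, deriv v c = 0) :
    (∫ x in a..b, v x) ^ 2 * ∫ x in a..b, deriv v x ^ 2 ≤
      4 * (b - a) ^ 4 * ∫ x in a..b, v x ^ 2 * deriv (deriv v) x ^ 2 := by
  have : 0 ≤ b - a := sub_nonneg.2 hab
  have hv'_sq : IntervalIntegrable (fun x ↦ deriv v x ^ 2) volume a b :=
    (hv'.continuousOn.pow 2).intervalIntegrable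
  set M := ∫ x in a..b, v x
  set A := ∫ x in a..b, deriv v x ^ 2
  set B := ∫ x in a..b, deriv (deriv v) x ^ 2
  set D := ∫ x in a..b, v x ^ 2 * deriv (deriv v) x ^ 2
  have hA : 0 ≤ A := intervalIntegral.integral_nonneg hab fun _ _ ↦ sq_nonneg _
  rcases le_total (M ^ 2) (4 * (b - a) ^ 3 * A) with hM | hM
  · have hAD : A ^ 2 ≤ (b - a) * D :=
      sq_integral_sq_deriv_le_sub_mul_integral_sq_mul_sq_deriv_deriv hab hv hv' hv''_sq hbdry
    calc M ^ 2 * A ≤ 4 * (b - a) ^ 3 * A * A := by gcongr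
      _ = 4 * (b - a) ^ 3 * A ^ 2 := by ring
      _ ≤ 4 * (b - a) ^ 3 * ((b - a) * D) := by gcongr
      _ = 4 * (b - a) ^ 4 * D := by ring
  · have hAB : A ≤ (b - a) ^ 2 * B := by
      obtain ⟨c, hc, hvc⟩ := hcrit
      simpa only [hvc, sub_zero] using integral_sq_sub_le_sq_mul_integral_sq_deriv hv' hv''_sq hc
    have hBD : M ^ 2 * B ≤ 4 * (b - a) ^ 2 * D :=
      sq_integral_mul_integral_sq_le_of_pow_mul_integral_sq_deriv_le hab hv hv'_sq hv''_sq hM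
    calc M ^ 2 * A ≤ M ^ 2 * ((b - a) ^ 2 * B) := by gcongr
      _ = (b - a) ^ 2 * (M ^ 2 * B) := by ring
      _ ≤ (b - a) ^ 2 * (4 * (b - a) ^ 2 * D) := by gcongr
      _ = 4 * (b - a) ^ 4 * D := by ring

end IntervalInequalities

theorem periodic_deriv {𝕜 F : Type*} [NontriviallyNormedField 𝕜] [NormedAddCommGroup F]
    [NormedSpace 𝕜 F] {f : 𝕜 → F} {T : 𝕜} (hf : Function.Periodic f T) :
    Function.Periodic (deriv f) T := fun x ↦ by
  rw [← deriv_comp_add_const, hf.funext]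

/-- Lemma 4.6 of the paper: for every `L > 0` there is `C > 0` (depending only on `L`)
such that for every nonnegative `L`-periodic `v ∈ C²(ℝ)`,
`∫₀ᴸ v² (v'')² ≥ C (∫₀ᴸ v)² ∫₀ᴸ (v')²`. -/
theorem stmt_4 (L : ℝ) (hL : 0 < L) :
    ∃ C : ℝ, 0 < C ∧ ∀ v : ℝ → ℝ,
      ContDiff ℝ 2 v → Function.Periodic v L → (∀ x, 0 ≤ v x) →
      C * (∫ x in (0:ℝ)..L, v x) ^ 2 * ∫ x in (0:ℝ)..L, (deriv v x) ^ 2 ≤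
        ∫ x in (0:ℝ)..L, (v x) ^ 2 * (deriv (deriv v) x) ^ 2 := by
  refine ⟨(4 * L ^ 4)⁻¹, by positivity, fun v hv hper _ ↦ ?_⟩
  have hv' : ContDiff ℝ 1 (deriv v) := hv.deriv'
  obtain ⟨c, hc, hvc⟩ := exists_deriv_eq_zero hL hv.continuous.continuousOn hper.eq.symm
  rw [mul_assoc, inv_mul_le_iff₀ (by positivity)]
  simpa only [sub_zero] using stmt_4_general hL.le
    (hv.of_le one_le_two).contDiffOn.absolutelyContinuousOnInterval
    hv'.contDiffOn.absolutelyContinuousOnInterval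
    ((hv'.continuous_deriv_one.pow 2).intervalIntegrable _ _)
    (by rw [hper.eq, (periodic_deriv hper).eq]) ⟨c, Ioo_subset_Icc_self hc, hvc⟩
end

section
/- Let L > 0, ε > 0, and let u ∈ C³(ℝ) be L-periodic and strictly positive. Set I := ∫₀^L f_ε(u)(u''')² dx and J := (1/2)∫₀^L (u')² dx. Then √(2 I J) ≥ −∫₀^L √(f_ε(u)) u' u''' dx ≥ ∫₀^L √(f_ε(u)) (u'')² dx − (2/3) ε² ∫₀^L (ε + u²)^{−5/2} (u')⁴ dx. -/
/-!
Let `g = √f_ε`. By periodicity, `∫ (g(u) u' u'' - g'(u) (u')³ / 3)' = 0`; the terms in `(u')² u''`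
cancel in this derivative, so `-∫ g(u) u' u''' = ∫ g(u) (u'')² - (1/3) ∫ g''(u) (u')⁴`.
Since `g''(s) = ε (2ε - s²) (ε + s²)^(-5/2) ≤ 2 ε² (ε + s²)^(-5/2)`, the lower bound follows.
The upper bound is Cauchy–Schwarz applied to `(√f_ε(u) u''') · u'`.
-/

open MeasureTheory Real

section CauchySchwarz

theorem abs_integral_mul_le_sqrt {α : Type*} [MeasurableSpace α] {μ : Measure α} {f g : α → ℝ}
    (hf : MemLp f 2 μ) (hg : MemLp g 2 μ) :
    |∫ x, f x * g x ∂μ| ≤ √((∫ x, f x ^ 2 ∂μ) * ∫ x, g x ^ 2 ∂μ) := by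
  have holder := integral_mul_norm_le_Lp_mul_Lq (μ := μ) HolderConjugate.two_two
    (by simpa using hf) (by simpa using hg)
  simp only [rpow_ofNat, norm_eq_abs, sq_abs, ← sqrt_eq_rpow] at holder
  calc |∫ x, f x * g x ∂μ| ≤ ∫ x, |f x * g x| ∂μ := abs_integral_le_integral_abs
    _ = ∫ x, |f x| * |g x| ∂μ := by simp only [abs_mul]
    _ ≤ √(∫ x, f x ^ 2 ∂μ) * √(∫ x, g x ^ 2 ∂μ) := holder
    _ = √((∫ x, f x ^ 2 ∂μ) * ∫ x, g x ^ 2 ∂μ) :=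
      (sqrt_mul (integral_nonneg fun x => sq_nonneg (f x)) _).symm

theorem abs_intervalIntegral_mul_le_sqrt {f g : ℝ → ℝ} (hf : Continuous f) (hg : Continuous g)
    (a b : ℝ) :
    |∫ x in a..b, f x * g x| ≤ √((∫ x in a..b, f x ^ 2) * ∫ x in a..b, g x ^ 2) := by
  have memLp {h : ℝ → ℝ} (hh : Continuous h) : MemLp h 2 (volume.restrict (Set.uIoc a b)) :=
    (memLp_two_iff_integrable_sq hh.aestronglyMeasurable).2
      ((hh.pow 2).intervalIntegrable a b).def'
  have hcs := abs_integral_mul_le_sqrt (memLp hf) (memLp hg)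
  rw [intervalIntegral.abs_intervalIntegral_eq]
  simp only [intervalIntegral.intervalIntegral_eq_integral_uIoc, smul_eq_mul]
  split_ifs <;> simpa using hcs

theorem abs_intervalIntegral_sqrt_mul_mul_le_sqrt {m v w : ℝ → ℝ} (hm : Continuous m)
    (hm0 : ∀ x, 0 ≤ m x) (hv : Continuous v) (hw : Continuous w) (a b : ℝ) :
    |∫ x in a..b, √(m x) * v x * w x| ≤
      √((∫ x in a..b, m x * w x ^ 2) * ∫ x in a..b, v x ^ 2) := by
  have hcs := abs_intervalIntegral_mul_le_sqrt (hm.sqrt.mul hw) hv a b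
  simpa only [Pi.mul_apply, mul_pow, sq_sqrt (hm0 _), mul_right_comm] using hcs

end CauchySchwarz

section IterateDeriv

variable {𝕜 E : Type*} [NontriviallyNormedField 𝕜] [NormedAddCommGroup E] [NormedSpace 𝕜 E]
  {f : 𝕜 → E}

theorem periodic_deriv_s6 {c : 𝕜} (hf : Function.Periodic f c) : Function.Periodic (deriv f) c :=
  fun x => by rw [← deriv_comp_add_const, hf.funext]

theorem continuous_iterate_deriv {n k : ℕ} (hf : ContDiff 𝕜 n f) (hk : k ≤ n) :
    Continuous (deriv^[k] f) := by
  simpa only [iteratedDeriv_eq_iterate] using hf.continuous_iteratedDeriv k (mod_cast hk)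

theorem hasDerivAt_iterate_deriv {n k : ℕ} (hf : ContDiff 𝕜 n f) (hk : k < n) (x : 𝕜) :
    HasDerivAt (deriv^[k] f) (deriv^[k + 1] f x) x := by
  have hdiff := (hf.differentiable_iteratedDeriv k (mod_cast hk)) x
  simpa only [← iteratedDeriv_eq_iterate, iteratedDeriv_succ] using hdiff.hasDerivAt

end IterateDeriv

section WeightedIdentity

theorem integral_eq_zero_of_hasDerivAt_of_periodic {E : Type*} [NormedAddCommGroup E]
    [NormedSpace ℝ E] [CompleteSpace E] {F F' : ℝ → E} {L a : ℝ} (hF : Function.Periodic F L)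
    (hderiv : ∀ x, HasDerivAt F (F' x) x) (hint : IntervalIntegrable F' volume a (a + L)) :
    ∫ x in a..a + L, F' x = 0 := by
  rw [intervalIntegral.integral_eq_sub_of_hasDerivAt (fun x _ => hderiv x) hint, hF a, sub_self]

variable {g u : ℝ → ℝ}

theorem hasDerivAt_comp_mul_deriv_mul_deriv_two_sub (hg : ContDiff ℝ 2 g) (hu : ContDiff ℝ 3 u)
    (x : ℝ) :
    HasDerivAt (fun x => g (u x) * deriv u x * deriv^[2] u x - deriv g (u x) * deriv u x ^ 3 / 3)
      (g (u x) * deriv^[2] u x ^ 2 + g (u x) * deriv u x * deriv^[3] u x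
        - deriv^[2] g (u x) * deriv u x ^ 4 / 3) x := by
  have hu₀ : HasDerivAt u (deriv u x) x := hasDerivAt_iterate_deriv hu (k := 0) (by norm_num) x
  have hu₁ : HasDerivAt (deriv u) (deriv^[2] u x) x :=
    hasDerivAt_iterate_deriv hu (k := 1) (by norm_num) x
  have hu₂ : HasDerivAt (deriv^[2] u) (deriv^[3] u x) x :=
    hasDerivAt_iterate_deriv hu (by norm_num) x
  have hg₀ : HasDerivAt (fun x => g (u x)) (deriv g (u x) * deriv u x) x :=
    (hasDerivAt_iterate_deriv hg (k := 0) (by norm_num) (u x)).comp x hu₀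
  have hg₁ : HasDerivAt (fun x => deriv g (u x)) (deriv^[2] g (u x) * deriv u x) x :=
    (hasDerivAt_iterate_deriv hg (k := 1) (by norm_num) (u x)).comp x hu₀
  refine (((hg₀.fun_mul hu₁).fun_mul hu₂).fun_sub
    ((hg₁.fun_mul (hu₁.fun_pow 3)).div_const 3)).congr_deriv ?_
  ring

theorem neg_integral_comp_mul_deriv_mul_deriv_three (hg : ContDiff ℝ 2 g) (hu : ContDiff ℝ 3 u)
    {L : ℝ} (hup : Function.Periodic u L) (a : ℝ) :
    -∫ x in a..a + L, g (u x) * deriv u x * deriv^[3] u x =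
      (∫ x in a..a + L, g (u x) * deriv^[2] u x ^ 2) -
        (1 / 3) * ∫ x in a..a + L, deriv^[2] g (u x) * deriv u x ^ 4 := by
  have hg₂ : Continuous (deriv^[2] g) := continuous_iterate_deriv hg le_rfl
  have hu₁ : Continuous (deriv u) := continuous_iterate_deriv hu (k := 1) (by norm_num)
  have hu₂ : Continuous (deriv^[2] u) := continuous_iterate_deriv hu (by norm_num)
  have hu₃ : Continuous (deriv^[3] u) := continuous_iterate_deriv hu le_rfl
  have hper : Function.Periodic
      (fun x => g (u x) * deriv u x * deriv^[2] u x - deriv g (u x) * deriv u x ^ 3 / 3) L :=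
    fun x => by
      have hup₁ := periodic_deriv_s6 hup
      have hup₂ : Function.Periodic (deriv^[2] u) L := periodic_deriv_s6 hup₁
      simp only [hup x, hup₁ x, hup₂ x]
  have hzero := integral_eq_zero_of_hasDerivAt_of_periodic (a := a) hper
    (hasDerivAt_comp_mul_deriv_mul_deriv_two_sub hg hu)
    (Continuous.intervalIntegrable (by fun_prop) _ _)
  rw [intervalIntegral.integral_sub, intervalIntegral.integral_add,
    intervalIntegral.integral_div] at hzero
  · linarith
  all_goals exact Continuous.intervalIntegrable (by fun_prop) _ _

end WeightedIdentity

section Mobility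

/-- The regularized mobility `f_ε(s) = s⁴ / (ε + s²)` of the thin-film equation. -/
noncomputable def mobility (ε s : ℝ) : ℝ := s ^ 4 / (ε + s ^ 2)

variable {ε : ℝ}

theorem mobility_nonneg (hε : 0 ≤ ε) (s : ℝ) : 0 ≤ mobility ε s := by
  unfold mobility
  positivity

theorem continuous_mobility (hε : 0 < ε) : Continuous (mobility ε) :=
  Continuous.div (by fun_prop) (by fun_prop) fun s => by positivity

theorem sqrt_mobility (hε : 0 ≤ ε) (s : ℝ) :
    √(mobility ε s) = s ^ 2 * (ε + s ^ 2) ^ (-(1 : ℝ) / 2) := by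
  have hs : s ^ 4 = (s ^ 2) ^ 2 := by ring
  rw [mobility, sqrt_div (by positivity), hs, sqrt_sq (sq_nonneg s), neg_div,
    rpow_neg (by positivity), ← sqrt_eq_rpow, div_eq_mul_inv]

theorem contDiff_sqrt_mobility (hε : 0 < ε) {n : WithTop ℕ∞} :
    ContDiff ℝ n fun s => √(mobility ε s) := by
  simp only [sqrt_mobility hε.le]
  exact (contDiff_id.pow 2).mul
    ((contDiff_const.add (contDiff_id.pow 2)).rpow_const_of_ne fun s => by positivity)

theorem hasDerivAt_add_sq_rpow (hε : 0 < ε) (p s : ℝ) :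
    HasDerivAt (fun s => (ε + s ^ 2) ^ p) (2 * p * s * (ε + s ^ 2) ^ (p - 1)) s := by
  have hbase : HasDerivAt (fun s => ε + s ^ 2) (2 * s) s := by
    simpa using (hasDerivAt_pow 2 s).const_add ε
  refine (hbase.rpow_const (.inl (by positivity))).congr_deriv ?_
  ring

theorem deriv_sqrt_mobility (hε : 0 < ε) :
    deriv (fun s => √(mobility ε s)) =
      fun s => (2 * ε * s + s ^ 3) * (ε + s ^ 2) ^ (-(3 : ℝ) / 2) := by
  ext s
  simp only [sqrt_mobility hε.le]
  have hw : 0 < ε + s ^ 2 := by positivity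
  have hpow : (ε + s ^ 2) ^ (-(1 : ℝ) / 2) = (ε + s ^ 2) ^ (-(3 : ℝ) / 2) * (ε + s ^ 2) := by
    rw [← rpow_add_one hw.ne']
    norm_num
  have hexp : -(1 : ℝ) / 2 - 1 = -3 / 2 := by norm_num
  rw [((hasDerivAt_pow 2 s).fun_mul (hasDerivAt_add_sq_rpow hε (-1 / 2) s)).deriv, hexp, hpow]
  ring

theorem iterate_deriv_two_sqrt_mobility (hε : 0 < ε) (s : ℝ) :
    deriv^[2] (fun s => √(mobility ε s)) s =
      ε * (2 * ε - s ^ 2) * (ε + s ^ 2) ^ (-(5 : ℝ) / 2) := by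
  have hw : 0 < ε + s ^ 2 := by positivity
  have hpow : (ε + s ^ 2) ^ (-(3 : ℝ) / 2) = (ε + s ^ 2) ^ (-(5 : ℝ) / 2) * (ε + s ^ 2) := by
    rw [← rpow_add_one hw.ne']
    norm_num
  have hexp : -(3 : ℝ) / 2 - 1 = -5 / 2 := by norm_num
  have hpoly : HasDerivAt (fun s => 2 * ε * s + s ^ 3) (2 * ε + 3 * s ^ 2) s := by
    simpa using ((hasDerivAt_id s).const_mul (2 * ε)).fun_add (hasDerivAt_pow 3 s)
  change deriv (deriv fun s => √(mobility ε s)) s = _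
  rw [deriv_sqrt_mobility hε, (hpoly.fun_mul (hasDerivAt_add_sq_rpow hε (-3 / 2) s)).deriv, hexp,
    hpow]
  ring

theorem iterate_deriv_two_sqrt_mobility_le (hε : 0 < ε) (s : ℝ) :
    deriv^[2] (fun s => √(mobility ε s)) s ≤ 2 * ε ^ 2 * (ε + s ^ 2) ^ (-(5 : ℝ) / 2) := by
  rw [iterate_deriv_two_sqrt_mobility hε]
  have hcoeff : ε * (2 * ε - s ^ 2) ≤ 2 * ε ^ 2 := by
    nlinarith only [mul_nonneg hε.le (sq_nonneg s)]
  gcongr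

theorem integral_iterate_deriv_two_sqrt_mobility_mul_le (hε : 0 < ε) {u v : ℝ → ℝ}
    (hu : Continuous u) (hv : Continuous v) {a b : ℝ} (hab : a ≤ b) :
    ∫ x in a..b, deriv^[2] (fun s => √(mobility ε s)) (u x) * v x ^ 4 ≤
      2 * ε ^ 2 * ∫ x in a..b, (ε + u x ^ 2) ^ (-(5 : ℝ) / 2) * v x ^ 4 := by
  have hg : Continuous fun x => deriv^[2] (fun s => √(mobility ε s)) (u x) :=
    (continuous_iterate_deriv (contDiff_sqrt_mobility hε) le_rfl).comp hu
  have hw : Continuous fun x => (ε + u x ^ 2) ^ (-(5 : ℝ) / 2) :=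
    Continuous.rpow_const (by fun_prop) fun x => .inl (by positivity)
  rw [← intervalIntegral.integral_const_mul]
  refine intervalIntegral.integral_mono hab (Continuous.intervalIntegrable (by fun_prop) _ _)
    (Continuous.intervalIntegrable (by fun_prop) _ _) fun x => ?_
  calc deriv^[2] (fun s => √(mobility ε s)) (u x) * v x ^ 4
      ≤ 2 * ε ^ 2 * (ε + u x ^ 2) ^ (-(5 : ℝ) / 2) * v x ^ 4 := by
        gcongr
        exact iterate_deriv_two_sqrt_mobility_le hε (u x)
    _ = 2 * ε ^ 2 * ((ε + u x ^ 2) ^ (-(5 : ℝ) / 2) * v x ^ 4) := mul_assoc _ _ _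

end Mobility

theorem stmt_6_general (L ε : ℝ) (hL : 0 < L) (hε : 0 < ε) (u : ℝ → ℝ)
    (hu : ContDiff ℝ 3 u) (hup : Function.Periodic u L) :
    √(2 * (∫ x in (0 : ℝ)..L, mobility ε (u x) * deriv^[3] u x ^ 2) *
        ((1 / 2) * ∫ x in (0 : ℝ)..L, deriv u x ^ 2)) ≥
      (-∫ x in (0 : ℝ)..L, √(mobility ε (u x)) * deriv u x * deriv^[3] u x) ∧
    (-∫ x in (0 : ℝ)..L, √(mobility ε (u x)) * deriv u x * deriv^[3] u x) ≥
      (∫ x in (0 : ℝ)..L, √(mobility ε (u x)) * deriv^[2] u x ^ 2) -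
        (2 / 3) * ε ^ 2 *
          ∫ x in (0 : ℝ)..L, (ε + u x ^ 2) ^ (-(5 : ℝ) / 2) * deriv u x ^ 4 := by
  have hu₁ : Continuous (deriv u) := continuous_iterate_deriv hu (k := 1) (by norm_num)
  have hu₃ : Continuous (deriv^[3] u) := continuous_iterate_deriv hu le_rfl
  constructor
  · have hcs := abs_intervalIntegral_sqrt_mul_mul_le_sqrt
      ((continuous_mobility hε).comp hu.continuous) (fun x => mobility_nonneg hε.le (u x))
      hu₁ hu₃ 0 L
    rw [mul_mul_mul_comm, mul_one_div_cancel two_ne_zero, one_mul]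
    exact (neg_le_abs _).trans hcs
  · have hident := neg_integral_comp_mul_deriv_mul_deriv_three
      (contDiff_sqrt_mobility hε) hu hup 0
    have hbound := integral_iterate_deriv_two_sqrt_mobility_mul_le hε hu.continuous hu₁ hL.le
    rw [zero_add] at hident
    linarith

/-- Key estimate for the exponential energy decay (Section 7): for strictly positive
`L`-periodic `u ∈ C³(ℝ)`, with `I = ∫₀ᴸ f_ε(u)(u''')²` and `J = (1/2)∫₀ᴸ (u')²`,
`√(2IJ) ≥ −∫₀ᴸ √(f_ε(u)) u' u''' ≥ ∫₀ᴸ √(f_ε(u)) (u'')² − (2/3)ε² ∫₀ᴸ (ε+u²)^{−5/2}(u')⁴`. -/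
theorem stmt_6 (L ε : ℝ) (hL : 0 < L) (hε : 0 < ε) (u : ℝ → ℝ)
    (hu : ContDiff ℝ 3 u) (hup : Function.Periodic u L) (hpos : ∀ x, 0 < u x) :
    Real.sqrt (2 * (∫ x in (0:ℝ)..L, (u x ^ 4 / (ε + u x ^ 2)) * (deriv^[3] u x) ^ 2) *
        ((1 / 2) * ∫ x in (0:ℝ)..L, (deriv u x) ^ 2)) ≥
      (-∫ x in (0:ℝ)..L, Real.sqrt (u x ^ 4 / (ε + u x ^ 2)) * deriv u x * deriv^[3] u x) ∧
    (-∫ x in (0:ℝ)..L, Real.sqrt (u x ^ 4 / (ε + u x ^ 2)) * deriv u x * deriv^[3] u x) ≥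
      (∫ x in (0:ℝ)..L, Real.sqrt (u x ^ 4 / (ε + u x ^ 2)) * (deriv^[2] u x) ^ 2) -
        (2 / 3) * ε ^ 2 *
          ∫ x in (0:ℝ)..L, (ε + u x ^ 2) ^ (-(5 : ℝ) / 2) * (deriv u x) ^ 4 := by
  exact stmt_6_general L ε hL hε u hu hup
end
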